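/- arXiv:2407.11533 — 8 statements merged into one kernel-verified Lean document; each statement's English description precedes it below -/
import Mathlib

section
/- For every integer n ≥ 1, the set { π_r : r ∈ [0,1] } of Kronecker permutations of {1,…,n} is finite and has cardinality at most n² + n + 1. (In particular, the number of distinct Kronecker permutations generated by rank-one lattices with first point at the origin is O(n²).) -/
/-!
The order of the numbers `Int.fract (i * r)` for `1 ≤ i ≤ n` is determined by the position of `r`
relative to the Farey fractions `p / q` with `0 ≤ p ≤ q ≤ n`: both `⌊k * r⌋` and the comparison
of `Int.fract (j * r)` with `Int.fract (i * r)` depend only on the signs of expressions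
`k * r - m` with `k`, `m` integers and `|k| ≤ n`, and such a sign can change inside `[0, 1]` only
at a Farey fraction (`sign_stable`, `kroneckerPerm_eq_of_gap`).

There are at most `1 + n (n + 1) / 2` Farey fractions (`card_farey_le`), and these include `0` and
`1`. If there are `N` of them, they cut `[0, 1]` into `N` points and `N - 1` open intervals, so at
most `2 N - 1 ≤ n ^ 2 + n + 1` permutations occur. The pieces are enumerated by `fareyIndex`,
which takes values in `{1, …, 2 N - 1}`.
-/

open scoped Classical

/-- The Kronecker permutation of `{1,…,n}` (indexed by `Fin n`, with `i : Fin n`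
representing the integer `i + 1`) induced by a real number `r`:
`π_r(i)` is the rank of `Int.fract (i * r)` among `Int.fract (1*r), …, Int.fract (n*r)`,
ties broken by index. -/
noncomputable def kroneckerPerm (n : ℕ) (r : ℝ) : Fin n → ℕ := fun i =>
  (Finset.univ.filter fun j : Fin n =>
      Int.fract (((j : ℕ) + 1 : ℝ) * r) < Int.fract (((i : ℕ) + 1 : ℝ) * r) ∨
      (Int.fract (((j : ℕ) + 1 : ℝ) * r) = Int.fract (((i : ℕ) + 1 : ℝ) * r) ∧ j ≤ i)).card

/-- The Farey fractions of order `n`: `0` together with all `p / q` with `1 ≤ p ≤ q ≤ n`. -/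
noncomputable def farey (n : ℕ) : Finset ℝ :=
  insert 0 (((Finset.Icc 1 n).sigma fun q => Finset.Icc 1 q).image
    fun x : (_ : ℕ) × ℕ => (x.2 : ℝ) / (x.1 : ℝ))

lemma div_mem_farey {n p q : ℕ} (hq : 1 ≤ q) (hqn : q ≤ n) (hpq : p ≤ q) :
    (p : ℝ) / (q : ℝ) ∈ farey n := by
  rcases Nat.eq_zero_or_pos p with rfl | hp
  · simp [farey]
  · exact Finset.mem_insert_of_mem (Finset.mem_image.2 ⟨⟨q, p⟩, by
      simp only [Finset.mem_sigma, Finset.mem_Icc]; omega, rfl⟩)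

lemma card_farey_le (n : ℕ) : 2 * (farey n).card ≤ n ^ 2 + n + 2 := by
  have h1 : (farey n).card ≤ ((Finset.Icc 1 n).sigma fun q => Finset.Icc 1 q).card + 1 :=
    (Finset.card_insert_le _ _).trans (Nat.add_le_add_right Finset.card_image_le 1)
  have h2 : 2 * ((Finset.Icc 1 n).sigma fun q => Finset.Icc 1 q).card = n ^ 2 + n := by
    simp only [Finset.card_sigma, Nat.card_Icc, Nat.add_sub_cancel]
    induction n with
    | zero => simp
    | succ k ih =>
      rw [Finset.sum_Icc_succ_top (by omega), mul_add, ih]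
      · ring
      · exact (Finset.card_insert_le _ _).trans (Nat.add_le_add_right Finset.card_image_le 1)
  omega

/-- If `[r, s] ⊆ [0, 1]` contains no Farey fraction of order `n`, then `k * x - m` has the same
sign at `r` and at `s`: its only possible zero `m / k` would be such a fraction. -/
lemma sign_stable {n : ℕ} {r s : ℝ} (h0 : 0 ≤ r) (hrs : r ≤ s) (h1 : s ≤ 1)
    (hF : ∀ x ∈ farey n, ¬ (r ≤ x ∧ x ≤ s)) (k m : ℤ) (hk : k.natAbs ≤ n) :
    ((k : ℝ) * r < m ↔ (k : ℝ) * s < m) ∧ ((k : ℝ) * r = m ↔ (k : ℝ) * s = m) := by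
  rcases eq_or_ne k 0 with rfl | hk0
  · simp
  have hkR : (k : ℝ) ≠ 0 := by exact_mod_cast hk0
  obtain ⟨t, ht⟩ : ∃ t : ℝ, t = m / k := ⟨_, rfl⟩
  have hm : (m : ℝ) = k * t := by rw [ht]; field_simp
  have hgap : ¬ (r ≤ t ∧ t ≤ s) := by
    rintro ⟨hrt, hts⟩
    have ht0 : 0 ≤ t := h0.trans hrt
    have htabs : t = (m.natAbs : ℝ) / (k.natAbs : ℝ) := by
      rw [Nat.cast_natAbs, Nat.cast_natAbs, Int.cast_abs, Int.cast_abs, ← abs_div, ← ht,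
        abs_of_nonneg ht0]
    have hkpos : 1 ≤ k.natAbs := Int.natAbs_pos.2 hk0
    have hle : m.natAbs ≤ k.natAbs := by
      have h : (m.natAbs : ℝ) / (k.natAbs : ℝ) ≤ 1 := htabs ▸ hts.trans h1
      rw [div_le_one (by exact_mod_cast hkpos)] at h
      exact_mod_cast h
    exact hF t (htabs ▸ div_mem_farey hkpos hk hle) ⟨hrt, hts⟩
  rw [hm]
  have hout : (t < r ∧ t < s) ∨ (r < t ∧ s < t) := by
    rcases lt_or_ge t r with h | h
    · exact Or.inl ⟨h, h.trans_le hrs⟩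
    · have := not_le.1 fun h' => hgap ⟨h, h'⟩
      exact Or.inr ⟨hrs.trans_lt this, this⟩
  constructor
  · rcases lt_or_gt_of_ne hkR with hneg | hpos
    · rw [mul_lt_mul_left_of_neg hneg, mul_lt_mul_left_of_neg hneg]
      rcases hout with ⟨a, b⟩ | ⟨a, b⟩
      · exact iff_of_true a b
      · exact iff_of_false a.not_gt b.not_gt
    · rw [mul_lt_mul_iff_right₀ hpos, mul_lt_mul_iff_right₀ hpos]
      rcases hout with ⟨a, b⟩ | ⟨a, b⟩
      · exact iff_of_false a.not_gt b.not_gt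
      · exact iff_of_true a b
  · rw [mul_right_inj' hkR, mul_right_inj' hkR]
    rcases hout with ⟨a, b⟩ | ⟨a, b⟩
    · exact iff_of_false a.ne' b.ne'
    · exact iff_of_false a.ne b.ne

lemma kroneckerPerm_eq_of_gap {n : ℕ} {r s : ℝ} (h0 : 0 ≤ r) (hrs : r ≤ s) (h1 : s ≤ 1)
    (hF : ∀ x ∈ farey n, ¬ (r ≤ x ∧ x ≤ s)) : kroneckerPerm n r = kroneckerPerm n s := by
  have key := sign_stable h0 hrs h1 hF
  have hfloor : ∀ j : Fin n, ⌊((j : ℕ) + 1 : ℝ) * r⌋ = ⌊((j : ℕ) + 1 : ℝ) * s⌋ := by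
    intro j
    refine eq_of_forall_le_iff fun m => ?_
    have h := (key ((j : ℕ) + 1 : ℤ) m (by have := j.2; omega)).1
    push_cast at h
    rw [Int.le_floor, Int.le_floor, ← not_lt, ← not_lt, h]
  funext i
  unfold kroneckerPerm
  congr 1
  refine Finset.filter_congr fun j _ => ?_
  obtain ⟨hlt, heq⟩ := key ((j : ℤ) - (i : ℤ))
    (⌊((j : ℕ) + 1 : ℝ) * s⌋ - ⌊((i : ℕ) + 1 : ℝ) * s⌋) (by have := j.2; have := i.2; omega)
  push_cast at hlt heq
  simp only [Int.fract, hfloor]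
  -- Once the floors agree, comparing the fractional parts is comparing `(j - i) * x` with an
  -- integer.
  have e1 : ∀ x a b : ℝ, (((j : ℕ) + 1 : ℝ) * x - a < ((i : ℕ) + 1 : ℝ) * x - b ↔
      (((j : ℕ) : ℝ) - ((i : ℕ) : ℝ)) * x < a - b) := fun x a b => by
    constructor <;> intro h <;> linarith
  have e2 : ∀ x a b : ℝ, (((j : ℕ) + 1 : ℝ) * x - a = ((i : ℕ) + 1 : ℝ) * x - b ↔
      (((j : ℕ) : ℝ) - ((i : ℕ) : ℝ)) * x = a - b) := fun x a b => by
    constructor <;> intro h <;> linarith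
  rw [e1, e1, e2, e2, hlt, heq]

/-- The index of the piece containing `r` when the line is cut at the Farey fractions into points
and open intervals: passing from a piece to the next one raises the index by one. -/
noncomputable def fareyIndex (n : ℕ) (r : ℝ) : ℕ :=
  ((farey n).filter fun x => x < r).card + ((farey n).filter fun x => x ≤ r).card

lemma fareyIndex_mem {n : ℕ} (hn : 1 ≤ n) {r : ℝ} (hr : r ∈ Set.Icc (0 : ℝ) 1) :
    fareyIndex n r ∈ Finset.Icc 1 (n ^ 2 + n + 1) := by
  have hzero : (0 : ℝ) ∈ farey n := Finset.mem_insert_self _ _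
  have hone : (1 : ℝ) ∈ farey n := by
    simpa using div_mem_farey (n := n) (p := 1) (q := 1) le_rfl hn le_rfl
  have a : 0 < ((farey n).filter fun x => x ≤ r).card :=
    Finset.card_pos.2 ⟨0, Finset.mem_filter.2 ⟨hzero, hr.1⟩⟩
  have b : ((farey n).filter fun x => x ≤ r).card ≤ (farey n).card := Finset.card_filter_le _ _
  have c : ((farey n).filter fun x => x < r).card < (farey n).card :=
    Finset.card_lt_card (Finset.filter_ssubset.2 ⟨1, hone, not_lt.2 hr.2⟩)
  have d := card_farey_le n
  rw [Finset.mem_Icc, fareyIndex]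
  omega

lemma kroneckerPerm_eq_of_fareyIndex_eq {n : ℕ} {r s : ℝ} (hr : r ∈ Set.Icc (0 : ℝ) 1)
    (hs : s ∈ Set.Icc (0 : ℝ) 1) (h : fareyIndex n r = fareyIndex n s) :
    kroneckerPerm n r = kroneckerPerm n s := by
  wlog hrs : r < s generalizing r s
  · rcases eq_or_lt_of_le (not_lt.1 hrs) with e | e
    · rw [e]
    · exact (this hs hr h.symm e).symm
  refine kroneckerPerm_eq_of_gap hr.1 hrs.le hs.2 fun x hx hxrs => ?_
  -- The four counting sets form a chain, so equal indices force its two ends to coincide.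
  have a : ((farey n).filter fun x => x < r).card ≤ ((farey n).filter fun x => x ≤ r).card :=
    Finset.card_le_card (Finset.monotone_filter_right _ fun _ _ hy => le_of_lt hy)
  have b : ((farey n).filter fun x => x ≤ r).card ≤ ((farey n).filter fun x => x < s).card :=
    Finset.card_le_card (Finset.monotone_filter_right _ fun _ _ hy => lt_of_le_of_lt hy hrs)
  have c : ((farey n).filter fun x => x < s).card ≤ ((farey n).filter fun x => x ≤ s).card :=
    Finset.card_le_card (Finset.monotone_filter_right _ fun _ _ hy => le_of_lt hy)
  have d : ((farey n).filter fun x => x < r).card < ((farey n).filter fun x => x ≤ s).card := by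
    refine Finset.card_lt_card (Finset.ssubset_iff_of_subset ?_ |>.2 ⟨x, ?_, ?_⟩)
    · exact Finset.monotone_filter_right _ fun _ _ hy => (lt_trans hy hrs).le
    · exact Finset.mem_filter.2 ⟨hx, hxrs.2⟩
    · exact fun hy => not_lt.2 hxrs.1 (Finset.mem_filter.1 hy).2
  unfold fareyIndex at h
  omega

/-- For every `n ≥ 1`, the set of Kronecker permutations `π_r` for `r ∈ [0,1]` is finite,
of cardinality at most `n² + n + 1`. -/
theorem kroneckerPerm_finite_card_le (n : ℕ) (hn : 1 ≤ n) :
    ({f : Fin n → ℕ | ∃ r ∈ Set.Icc (0 : ℝ) 1, f = kroneckerPerm n r}).Finite ∧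
    ({f : Fin n → ℕ | ∃ r ∈ Set.Icc (0 : ℝ) 1, f = kroneckerPerm n r}).ncard
      ≤ n ^ 2 + n + 1 := by
  -- `π_r` factors through `fareyIndex`, by choosing one representative for each index.
  have hsub : {f : Fin n → ℕ | ∃ r ∈ Set.Icc (0 : ℝ) 1, f = kroneckerPerm n r} ⊆
      (((Finset.Icc 1 (n ^ 2 + n + 1)).image fun v =>
        kroneckerPerm n (Function.invFunOn (fareyIndex n) (Set.Icc (0 : ℝ) 1) v) :
        Finset (Fin n → ℕ)) : Set (Fin n → ℕ)) := by
    rintro f ⟨r, hr, rfl⟩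
    have hex : ∃ a ∈ Set.Icc (0 : ℝ) 1, fareyIndex n a = fareyIndex n r := ⟨r, hr, rfl⟩
    exact Finset.mem_coe.2 (Finset.mem_image.2 ⟨fareyIndex n r, fareyIndex_mem hn hr,
      kroneckerPerm_eq_of_fareyIndex_eq (Function.invFunOn_mem hex) hr
        (Function.invFunOn_eq hex)⟩)
  refine ⟨(Finset.finite_toSet _).subset hsub, ?_⟩
  refine (Set.ncard_le_ncard hsub (Finset.finite_toSet _)).trans ?_
  rw [Set.ncard_coe_finset]
  exact Finset.card_image_le.trans (by simp)
end

section
/- For every integer n ≥ 1, the set { π_r : r ∈ (0,1), r irrational } of Kronecker permutations of {1,…,n} induced by irrational numbers is finite and has cardinality at most n(n+1)/2. -/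
/-!
The permutation `π_r` depends only on the integers `⌊k r⌋`, `1 ≤ k ≤ n`: comparing the fractional
parts of `i r` and `j r` amounts to comparing `|i - j| r` with an integer built from `⌊i r⌋` and
`⌊j r⌋`, hence to comparing `⌊|i - j| r⌋` with that integer (`kroneckerPerm_eq_of_floor_eq`).
Each `⌊k r⌋` is monotone in `r`, so the whole tuple is already determined by its sum
`⌊r⌋ + ⌊2 r⌋ + ⋯ + ⌊n r⌋` (`floor_eq_of_floorSum_eq`). For `r ∈ (0,1)` the `k`-th term lies
between `0` and `k - 1`, so the sum takes at most `n(n-1)/2 + 1 ≤ n(n+1)/2` values.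
-/

open scoped Classical

/-- The sum `⌊r⌋ + ⌊2 r⌋ + ⋯ + ⌊n r⌋`. On `(0,1)` it counts, with multiplicity, the fractions
`a / k ≤ r` with `1 ≤ a < k ≤ n`, so it locates `r` among the Farey fractions of order `n`. -/
noncomputable def floorSum (n : ℕ) (r : ℝ) : ℤ :=
  ∑ k ∈ Finset.range n, ⌊((k : ℝ) + 1) * r⌋

theorem kroneckerPerm_eq_of_floor_eq {n : ℕ} {r s : ℝ}
    (h : ∀ k < n, ⌊((k : ℝ) + 1) * r⌋ = ⌊((k : ℝ) + 1) * s⌋) :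
    kroneckerPerm n r = kroneckerPerm n s := by
  -- For `j < i` the tie-breaking turns the condition into a non-strict inequality,
  have key_le : ∀ (t : ℝ) (i j d : ℕ), i = j + (d + 1) →
      (Int.fract (((j : ℝ) + 1) * t) ≤ Int.fract (((i : ℝ) + 1) * t) ↔
        ⌊((i : ℝ) + 1) * t⌋ - ⌊((j : ℝ) + 1) * t⌋ ≤ ⌊((d : ℝ) + 1) * t⌋) := by
    intro t i j d hd
    rw [Int.le_floor, Int.fract, Int.fract]
    subst hd
    push_cast
    constructor <;> intro h <;> linarith
  -- and for `i < j` the condition is a strict inequality.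
  have key_lt : ∀ (t : ℝ) (i j d : ℕ), j = i + (d + 1) →
      (Int.fract (((j : ℝ) + 1) * t) < Int.fract (((i : ℝ) + 1) * t) ↔
        ⌊((d : ℝ) + 1) * t⌋ < ⌊((j : ℝ) + 1) * t⌋ - ⌊((i : ℝ) + 1) * t⌋) := by
    intro t i j d hd
    rw [← not_le, key_le t j i d hd, not_le]
  funext i
  unfold kroneckerPerm
  congr 1
  apply Finset.filter_congr
  intro j _
  rcases lt_trichotomy j i with hji | hji | hji
  · obtain ⟨d, hd⟩ : ∃ d : ℕ, (i : ℕ) = j + (d + 1) := ⟨i - j - 1, by have : (j : ℕ) < i := hji; omega⟩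
    simp only [hji.le, and_true, ← le_iff_lt_or_eq]
    rw [key_le r i j d hd, key_le s i j d hd, h i i.2, h j j.2, h d (by omega)]
  · subst hji
    simp
  · obtain ⟨d, hd⟩ : ∃ d : ℕ, (j : ℕ) = i + (d + 1) := ⟨j - i - 1, by have : (i : ℕ) < j := hji; omega⟩
    simp only [not_le.mpr hji, and_false, or_false]
    rw [key_lt r i j d hd, key_lt s i j d hd, h i i.2, h j j.2, h d (by omega)]

theorem floor_eq_of_floorSum_eq {n : ℕ} {r s : ℝ} (h : floorSum n r = floorSum n s) :
    ∀ k < n, ⌊((k : ℝ) + 1) * r⌋ = ⌊((k : ℝ) + 1) * s⌋ := by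
  wlog hrs : r ≤ s generalizing r s
  · intro k hk
    exact (this h.symm (le_of_not_ge hrs) k hk).symm
  intro k hk
  refine (Finset.sum_eq_sum_iff_of_le fun k _ => ?_).1 h k (Finset.mem_range.2 hk)
  gcongr

theorem floorSum_mem_Icc (n : ℕ) {r : ℝ} (hr : r ∈ Set.Ioo (0 : ℝ) 1) :
    floorSum n r ∈ Finset.Icc (0 : ℤ) ((n * (n - 1) / 2 : ℕ) : ℤ) := by
  obtain ⟨h0, h1⟩ := hr
  rw [Finset.mem_Icc, ← Finset.sum_range_id, Nat.cast_sum]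
  refine ⟨Finset.sum_nonneg fun k _ => Int.floor_nonneg.2 (by positivity),
    Finset.sum_le_sum fun k _ => ?_⟩
  rw [← Int.lt_add_one_iff, Int.floor_lt]
  push_cast
  nlinarith [(Nat.cast_nonneg k : (0 : ℝ) ≤ k)]

/-- For every `n ≥ 1`, the set of Kronecker permutations `π_r` induced by irrational
`r ∈ (0,1)` is finite, of cardinality at most `n(n+1)/2`. -/
theorem kroneckerPerm_irrational_finite_card_le (n : ℕ) (hn : 1 ≤ n) :
    ({f : Fin n → ℕ | ∃ r ∈ Set.Ioo (0 : ℝ) 1, Irrational r ∧ f = kroneckerPerm n r}).Finite ∧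
    ({f : Fin n → ℕ | ∃ r ∈ Set.Ioo (0 : ℝ) 1, Irrational r ∧ f = kroneckerPerm n r}).ncard
      ≤ n * (n + 1) / 2 := by
  -- Every permutation in question is recovered from the value of `floorSum` at its parameter.
  set T : Finset (Fin n → ℕ) := (Finset.Icc (0 : ℤ) ((n * (n - 1) / 2 : ℕ) : ℤ)).image
    fun m => kroneckerPerm n (Function.invFun (floorSum n) m) with hT
  have hsub : {f : Fin n → ℕ | ∃ r ∈ Set.Ioo (0 : ℝ) 1, Irrational r ∧ f = kroneckerPerm n r}
      ⊆ (T : Set (Fin n → ℕ)) := by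
    rintro f ⟨r, hr, -, rfl⟩
    rw [Finset.mem_coe, hT, Finset.mem_image]
    exact ⟨floorSum n r, floorSum_mem_Icc n hr, kroneckerPerm_eq_of_floor_eq
      (floor_eq_of_floorSum_eq (Function.invFun_eq ⟨r, rfl⟩))⟩
  refine ⟨T.finite_toSet.subset hsub, ?_⟩
  calc _ ≤ (T : Set (Fin n → ℕ)).ncard := Set.ncard_le_ncard hsub T.finite_toSet
    _ = T.card := Set.ncard_coe_finset T
    _ ≤ (Finset.Icc (0 : ℤ) ((n * (n - 1) / 2 : ℕ) : ℤ)).card := Finset.card_image_le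
    _ = n * (n - 1) / 2 + 1 := by rw [Int.card_Icc]; omega
    _ ≤ n * (n + 1) / 2 := by
      obtain ⟨m, rfl⟩ : ∃ m, n = m + 1 := ⟨n - 1, by omega⟩
      have : (m + 1) * (m + 1 + 1) = (m + 1) * (m + 1 - 1) + 2 * (m + 1) := by
        rw [Nat.add_sub_cancel]; ring
      rw [this]
      omega
end

section
/- Let n ≥ 1 be an integer and let r, r' be real numbers with 0 < r ≤ r' < 1. If the closed interval [r, r'] contains no rational number with (positive) denominator at most n, then for all i, j ∈ {1,…,n} one has frac(i·r) < frac(j·r) if and only if frac(i·r') < frac(j·r'). In other words, the relative order of the fractional parts frac(1·r),…,frac(n·r) is constant on every interval of [0,1] that avoids all rationals of denominator at most n. -/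
/-!
For `1 ≤ q ≤ n` and an integer `p`, the affine function `x ↦ q * x - p` has its zero `p / q`
outside `[r, r']`, hence has constant nonzero sign there. Taking `q = i` shows that `⌊i * x⌋` takes
the same value at `r` and `r'`. The difference of the fractional parts of `j * x` and `i * x` is
therefore given at both points by the same affine function of slope `j - i`; for `i ≠ j`, the
constancy of sign with `q = |j - i| < n` finishes the proof.
-/

/-- If `p / q` avoids `[r, r']`, then `q * x - p` is positive on all of `[r, r']` or negative on
all of it. -/
lemma lt_or_lt_of_div_notMem {r r' : ℝ} {p : ℤ} {q : ℕ} (hq : 1 ≤ q)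
    (h : (p : ℝ) / q ∉ Set.Icc r r') : (p : ℝ) < q * r ∨ (q : ℝ) * r' < p := by
  have hq0 : (0 : ℝ) < q := by exact_mod_cast hq
  by_contra! hc
  refine h ⟨?_, ?_⟩
  · rw [le_div_iff₀ hq0]; linarith
  · rw [div_le_iff₀ hq0]; linarith

/-- If `0 < r ≤ r' < 1` and the closed interval `[r, r']` contains no rational number
with positive denominator at most `n`, then the relative order of the fractional parts
`Int.fract (i * r)` for `i ∈ {1,…,n}` coincides with that of the `Int.fract (i * r')`. -/
theorem fract_order_constant_of_no_rational (n : ℕ) (hn : 1 ≤ n) (r r' : ℝ)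
    (h0 : 0 < r) (hrr' : r ≤ r') (h1 : r' < 1)
    (hno : ∀ (p : ℤ) (q : ℕ), 1 ≤ q → q ≤ n → (p : ℝ) / q ∉ Set.Icc r r') :
    ∀ i ∈ Finset.Icc 1 n, ∀ j ∈ Finset.Icc 1 n,
      (Int.fract ((i : ℝ) * r) < Int.fract ((j : ℝ) * r) ↔
        Int.fract ((i : ℝ) * r') < Int.fract ((j : ℝ) * r')) := by
  have key : ∀ (p : ℤ) (q : ℕ), 1 ≤ q → q ≤ n → (p : ℝ) < q * r ∨ (q : ℝ) * r' < p :=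
    fun p q hq hqn => lt_or_lt_of_div_notMem hq (hno p q hq hqn)
  have mono : ∀ q : ℕ, (q : ℝ) * r ≤ q * r' :=
    fun q => mul_le_mul_of_nonneg_left hrr' q.cast_nonneg
  have floor_eq : ∀ q : ℕ, 1 ≤ q → q ≤ n → ⌊(q : ℝ) * r⌋ = ⌊(q : ℝ) * r'⌋ := by
    intro q hq hqn
    apply le_antisymm (Int.floor_mono (mono q))
    rw [Int.le_floor]
    have h := Int.floor_le ((q : ℝ) * r')
    rcases key ⌊(q : ℝ) * r'⌋ q hq hqn with h' | h' <;> linarith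
  intro i hi j hj
  rw [Finset.mem_Icc] at hi hj
  unfold Int.fract
  rw [floor_eq i hi.1 hi.2, floor_eq j hj.1 hj.2]
  generalize ⌊(i : ℝ) * r'⌋ = a
  generalize ⌊(j : ℝ) * r'⌋ = b
  rcases lt_trichotomy i j with h | rfl | h
  · have hk := key (b - a) (j - i) (by omega) (by omega)
    have hm := mono (j - i)
    push_cast [Nat.cast_sub h.le] at hk hm
    constructor <;> intro h' <;> rcases hk with hk | hk <;> linarith
  · simp
  · have hk := key (a - b) (i - j) (by omega) (by omega)
    have hm := mono (i - j)
    push_cast [Nat.cast_sub h.le] at hk hm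
    constructor <;> intro h' <;> rcases hk with hk | hk <;> linarith
end

section
/- Let n ≥ 1 be an integer and let r, r' be real numbers with r < r'. If the Kronecker permutations satisfy π_r ≠ π_{r'}, then the closed interval [r, r'] contains a rational number with (positive) denominator at most n. (Equivalently: the Kronecker permutation can only change at rationals of denominator at most n.) -/
/-!
Suppose `[r, r']` contains no `p / q` with `1 ≤ q ≤ n`. Then for every nonzero integer `d` with
`|d| ≤ n` and every integer `m`, the affine function `t ↦ d * t - m`, whose only zero is `m / d`,
does not vanish on `[r, r']`, so it has the same strict sign at `r` and `r'` (`same_side`).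
Taking `d = q ∈ {1,…,n}` shows `⌊q r⌋ = ⌊q r'⌋`. With these floors fixed, comparing
`Int.fract (a * t)` with `Int.fract (b * t)` amounts to comparing `(a - b) * t` with the integer
`⌊a t⌋ - ⌊b t⌋`, and `|a - b| ≤ n`; so all comparisons, and hence the ranks, agree at `r` and `r'`.
-/


open scoped Classical

/-- If `[r, r']` avoids all rationals of denominator at most `n`, then for `0 < |d| ≤ n` the points
`d * r` and `d * r'` lie strictly on the same side of every integer `m`. -/
lemma same_side {n : ℕ} {r r' : ℝ} (hlt : r < r')
    (h : ∀ (p : ℤ) (q : ℕ), 1 ≤ q → q ≤ n → (p : ℝ) / q ∉ Set.Icc r r')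
    (d m : ℤ) (hd : d ≠ 0) (hdn : |d| ≤ n) :
    ((d : ℝ) * r < m ∧ (d : ℝ) * r' < m) ∨ ((m : ℝ) < d * r ∧ (m : ℝ) < d * r') := by
  have pos : ∀ (q : ℕ) (k : ℤ), 1 ≤ q → q ≤ n →
      ((q : ℝ) * r < k ∧ (q : ℝ) * r' < k) ∨ ((k : ℝ) < q * r ∧ (k : ℝ) < q * r') := by
    intro q k h1 h2
    have hq : (0 : ℝ) < q := by exact_mod_cast h1
    have hk := h k q h1 h2
    rw [Set.mem_Icc, le_div_iff₀ hq, div_le_iff₀ hq, not_and_or, not_le, not_le] at hk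
    have := mul_lt_mul_of_pos_left hlt hq
    rcases hk with hk | hk
    · right; constructor <;> linarith
    · left; constructor <;> linarith
  obtain ⟨q, rfl | rfl⟩ := d.eq_nat_or_neg
  · simpa using pos q m (by omega) (by simpa using hdn)
  · have := pos q (-m) (by omega) (by simpa using hdn)
    push_cast at this ⊢
    rcases this with ⟨h1, h2⟩ | ⟨h1, h2⟩
    · right; constructor <;> linarith
    · left; constructor <;> linarith

/-- The Kronecker permutation can only change at rationals of denominator at most `n`:
if `r < r'` and `π_r ≠ π_{r'}`, then `[r, r']` contains a rational `p/q` with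
`1 ≤ q ≤ n`. -/
theorem exists_rational_of_kroneckerPerm_ne (n : ℕ) (hn : 1 ≤ n) (r r' : ℝ)
    (hlt : r < r') (hne : kroneckerPerm n r ≠ kroneckerPerm n r') :
    ∃ (p : ℤ) (q : ℕ), 1 ≤ q ∧ q ≤ n ∧ (p : ℝ) / q ∈ Set.Icc r r' := by
  by_contra hcon
  have h : ∀ (p : ℤ) (q : ℕ), 1 ≤ q → q ≤ n → (p : ℝ) / q ∉ Set.Icc r r' :=
    fun p q h1 h2 h3 => hcon ⟨p, q, h1, h2, h3⟩
  have hfl : ∀ i : Fin n, ⌊((i : ℕ) + 1 : ℝ) * r⌋ = ⌊((i : ℕ) + 1 : ℝ) * r'⌋ := by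
    intro i
    have hi := i.isLt
    have key := fun m : ℤ => same_side hlt h ((i : ℕ) + 1) m (by omega)
      (by rw [abs_of_nonneg (by omega)]; omega)
    push_cast at key
    refine eq_of_forall_le_iff fun m => ?_
    rw [Int.le_floor, Int.le_floor]
    rcases key m with ⟨h1, h2⟩ | ⟨h1, h2⟩
    · exact iff_of_false h1.not_ge h2.not_ge
    · exact iff_of_true h1.le h2.le
  apply hne
  funext i
  unfold kroneckerPerm
  congr 1
  refine Finset.filter_congr fun j _ => ?_
  by_cases hij : j = i
  · subst hij; simp
  have hij' : (j : ℕ) ≠ i := fun e => hij (Fin.ext e)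
  have hi := i.isLt
  have hj := j.isLt
  have key := same_side hlt h ((j : ℕ) - (i : ℕ))
    (⌊((j : ℕ) + 1 : ℝ) * r⌋ - ⌊((i : ℕ) + 1 : ℝ) * r⌋) (by omega) (by rw [abs_le]; omega)
  push_cast at key
  simp only [Int.fract, ← hfl]
  rcases key with ⟨h1, h2⟩ | ⟨h1, h2⟩
  · exact iff_of_true (Or.inl (by linarith)) (Or.inl (by linarith))
  · refine iff_of_false ?_ ?_
    · rintro (h3 | ⟨h3, -⟩) <;> linarith
    · rintro (h3 | ⟨h3, -⟩) <;> linarith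
end

section
/- For all integers n ≥ 1 and d ≥ 2, the set of (d−1)-tuples (π_{r_1}, …, π_{r_{d−1}}) of Kronecker permutations of {1,…,n}, as (r_1,…,r_{d−1}) ranges over [0,1]^{d−1}, is finite and has cardinality at most (n² + n + 1)^{d−1}. (In particular, there exist only O(n^{2d−2}) Kronecker permutation tuples in dimension d.) -/
/-!
The permutation `π_r` only depends on the integers `⌊k r⌋` and `⌈k r⌉` for `1 ≤ k ≤ n`: comparing
`fract (j r)` with `fract (i r)` amounts to comparing `(i - j) r` with the integer
`⌊i r⌋ - ⌊j r⌋`, and `|i - j| ≤ n`. All these integers are monotone in `r`, so they are jointly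
determined by their sum `c(r) = ∑ k, (⌊k r⌋ + ⌈k r⌉)`: if two values of `r` give the same sum,
they give the same summands. For `r ∈ [0, 1]` one has `0 ≤ c(r) ≤ ∑ k, 2 k = n² + n`, hence there
are at most `n² + n + 1` Kronecker permutations, and at most `(n² + n + 1) ^ (d - 1)` tuples.
-/

open scoped Classical

/-- The monotone integer-valued step function `r ↦ ∑ k ∈ {1,…,n}, (⌊k r⌋ + ⌈k r⌉)`, which jumps
exactly at the fractions with denominator at most `n`, once on each side. -/
noncomputable def stepCount (n : ℕ) (r : ℝ) : ℤ :=
  ∑ k ∈ Finset.range n, (⌊((k : ℝ) + 1) * r⌋ + ⌈((k : ℝ) + 1) * r⌉)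

lemma stepCount_mono (n : ℕ) : Monotone (stepCount n) := by
  intro r s h
  unfold stepCount
  gcongr

lemma stepCount_zero (n : ℕ) : stepCount n 0 = 0 := by
  simp [stepCount]

lemma stepCount_one (n : ℕ) : stepCount n 1 = n ^ 2 + n := by
  induction n with
  | zero => simp [stepCount]
  | succ m ih =>
    unfold stepCount at ih ⊢
    rw [Finset.sum_range_succ, ih]
    simp only [mul_one, Int.floor_add_one, Int.ceil_add_one, Int.floor_natCast, Int.ceil_natCast]
    push_cast
    ring

/-- Equality of the sums forces equality of all summands, by monotonicity. -/
lemma floor_ceil_eq_of_stepCount_eq {n : ℕ} {r s : ℝ} (h : stepCount n r = stepCount n s)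
    {k : ℕ} (hk : k < n) :
    ⌊((k : ℝ) + 1) * r⌋ = ⌊((k : ℝ) + 1) * s⌋ ∧ ⌈((k : ℝ) + 1) * r⌉ = ⌈((k : ℝ) + 1) * s⌉ := by
  wlog hrs : r ≤ s generalizing r s
  · have := this h.symm (le_of_not_ge hrs)
    exact ⟨this.1.symm, this.2.symm⟩
  have hf : ∀ l : ℕ, ⌊((l : ℝ) + 1) * r⌋ ≤ ⌊((l : ℝ) + 1) * s⌋ := fun l => by gcongr
  have hc : ∀ l : ℕ, ⌈((l : ℝ) + 1) * r⌉ ≤ ⌈((l : ℝ) + 1) * s⌉ := fun l => by gcongr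
  have key := (Finset.sum_eq_sum_iff_of_le fun l _ => add_le_add (hf l) (hc l)).1 h k
    (Finset.mem_range.2 hk)
  have h1 := hf k
  have h2 := hc k
  omega

/-- The order of the fractional parts of `j r` and `i r` is read off from `stepCount n r`. -/
lemma fract_lt_iff_of_stepCount_eq {n : ℕ} {r s : ℝ} (h : stepCount n r = stepCount n s)
    {i j : ℕ} (hi : i < n) (hj : j < n) :
    Int.fract (((j : ℝ) + 1) * r) < Int.fract (((i : ℝ) + 1) * r) ↔
      Int.fract (((j : ℝ) + 1) * s) < Int.fract (((i : ℝ) + 1) * s) := by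
  have ei := (floor_ceil_eq_of_stepCount_eq h hi).1
  have ej := (floor_ceil_eq_of_stepCount_eq h hj).1
  unfold Int.fract
  rw [ei, ej]
  generalize ⌊((i : ℝ) + 1) * s⌋ = a
  generalize ⌊((j : ℝ) + 1) * s⌋ = b
  rcases lt_trichotomy i j with hij | rfl | hij
  · obtain ⟨k, rfl⟩ := Nat.exists_eq_add_of_lt hij
    -- here `j - i = k + 1`, and the comparison reads `(k + 1) r < b - a`
    have key : ∀ t : ℝ, (((i + k + 1 : ℕ) : ℝ) + 1) * t - b < ((i : ℝ) + 1) * t - a ↔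
        ⌊((k : ℝ) + 1) * t⌋ < b - a := fun t => by
      rw [Int.floor_lt]
      push_cast
      constructor <;> intro h <;> linarith
    rw [key, key, (floor_ceil_eq_of_stepCount_eq h (by omega : k < n)).1]
  · simp
  · obtain ⟨k, rfl⟩ := Nat.exists_eq_add_of_lt hij
    -- here `i - j = k + 1`, and the comparison reads `a - b < (k + 1) r`
    have key : ∀ t : ℝ, ((j : ℝ) + 1) * t - b < (((j + k + 1 : ℕ) : ℝ) + 1) * t - a ↔
        a - b < ⌈((k : ℝ) + 1) * t⌉ := fun t => by
      rw [Int.lt_ceil]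
      push_cast
      constructor <;> intro h <;> linarith
    rw [key, key, (floor_ceil_eq_of_stepCount_eq h (by omega : k < n)).2]

lemma kroneckerPerm_eq_of_stepCount_eq {n : ℕ} {r s : ℝ} (h : stepCount n r = stepCount n s) :
    kroneckerPerm n r = kroneckerPerm n s := by
  funext i
  unfold kroneckerPerm
  congr 1
  ext j
  have h1 := fract_lt_iff_of_stepCount_eq h i.2 j.2
  have h2 := fract_lt_iff_of_stepCount_eq h j.2 i.2
  simp only [Finset.mem_filter, Finset.mem_univ, true_and, le_antisymm_iff (α := ℝ), ← not_lt,
    h1, h2]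

/-- Kronecker permutations with parameter in `[0, 1]` are enumerated by `n² + n + 1` labels. -/
lemma exists_kroneckerPerm_labelling (n : ℕ) :
    ∃ φ : Fin (n ^ 2 + n + 1) → Fin n → ℕ,
      ∀ r ∈ Set.Icc (0 : ℝ) 1, ∃ m, φ m = kroneckerPerm n r := by
  refine ⟨fun m => if h : ∃ s, stepCount n s = ((m : ℕ) : ℤ) then kroneckerPerm n h.choose
    else 0, fun r hr => ?_⟩
  have h0 := stepCount_mono n hr.1
  have h1 := stepCount_mono n hr.2
  rw [stepCount_zero] at h0
  rw [stepCount_one] at h1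
  obtain ⟨c, hc⟩ := Int.eq_ofNat_of_zero_le h0
  have hlt : c < n ^ 2 + n + 1 := by
    rw [hc] at h1
    have : c ≤ n ^ 2 + n := by exact_mod_cast h1
    omega
  have hex : ∃ s, stepCount n s = (c : ℤ) := ⟨r, hc⟩
  refine ⟨⟨c, hlt⟩, ?_⟩
  simp only [dif_pos hex]
  exact kroneckerPerm_eq_of_stepCount_eq (hex.choose_spec.trans hc.symm)

/-- For `n ≥ 1` and `d ≥ 2`, the set of `(d-1)`-tuples of Kronecker permutations
`(π_{r_1}, …, π_{r_{d-1}})` with `(r_1,…,r_{d-1}) ∈ [0,1]^{d-1}` is finite, of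
cardinality at most `(n² + n + 1)^{d-1}`. -/
theorem kroneckerPerm_tuples_finite_card_le (n d : ℕ) (hn : 1 ≤ n) (hd : 2 ≤ d) :
    ({F : Fin (d - 1) → Fin n → ℕ |
        ∃ r : Fin (d - 1) → ℝ, (∀ k, r k ∈ Set.Icc (0 : ℝ) 1) ∧
          F = fun k => kroneckerPerm n (r k)}).Finite ∧
    ({F : Fin (d - 1) → Fin n → ℕ |
        ∃ r : Fin (d - 1) → ℝ, (∀ k, r k ∈ Set.Icc (0 : ℝ) 1) ∧
          F = fun k => kroneckerPerm n (r k)}).ncard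
      ≤ (n ^ 2 + n + 1) ^ (d - 1) := by
  obtain ⟨φ, hφ⟩ := exists_kroneckerPerm_labelling n
  set S := {F : Fin (d - 1) → Fin n → ℕ |
        ∃ r : Fin (d - 1) → ℝ, (∀ k, r k ∈ Set.Icc (0 : ℝ) 1) ∧
          F = fun k => kroneckerPerm n (r k)}
  have hsub : S ⊆ (fun (m : Fin (d - 1) → Fin (n ^ 2 + n + 1)) k => φ (m k)) '' Set.univ := by
    rintro F ⟨r, hr, rfl⟩
    choose m hm using fun k => hφ (r k) (hr k)
    exact ⟨m, Set.mem_univ _, funext hm⟩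
  have hfin := (Set.finite_univ (α := Fin (d - 1) → Fin (n ^ 2 + n + 1))).image
    fun m k => φ (m k)
  refine ⟨hfin.subset hsub, (Set.ncard_le_ncard hsub hfin).trans ?_⟩
  refine (Set.ncard_image_le Set.finite_univ).trans ?_
  simp [Set.ncard_univ, Nat.card_eq_fintype_card]
end

section
/- Three-distance theorem, permutation form (Sós): Let α be an irrational real number, n ≥ 1 an integer, and let σ be the unique permutation of {1,…,n} with frac(σ(1)·α) < frac(σ(2)·α) < … < frac(σ(n)·α). Then for every i ∈ {1,…,n−1}, the integer difference σ(i+1) − σ(i) belongs to the three-element set { σ(1), −σ(n), σ(1) − σ(n) }. -/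
/-!
Write `g m = fract (m * α)`, `a = σ 1` and `b = σ n`, so that `a` minimises and `b` maximises `g`
on `[1, n]`. If `x = σ i`, the successor of `x` in the order given by `g` is

* `x + a` when `x + a ≤ n`,
* `x - b` when `b < x`,
* `x + a - b` when `n - a < x ≤ b`.

In each case this candidate `z` lies in `[1, n]` and satisfies `g x < g z`. If the true successor
`y` were different, then `g y < g z`, and some integer combination of `x`, `y`, `a`, `b` lying in
`[1, n]` would have a `g`-value below `g a` or above `g b`. The only property of `g` that enters is
that it takes values in `[0, 1)` and is additive modulo `1`.
-/

/-- The combinatorial core, for any `g : ℤ → ℝ` with values in `[0, 1)` that is subtractive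
modulo `1`. Here `a` and `b` are the unique minimiser and maximiser of `g` on `[1, n]`, and `hnext`
says that `y` is the successor of `x` in the order given by `g`. -/
theorem sub_mem_of_succ (g : ℤ → ℝ) (h0 : ∀ m, 0 ≤ g m) (h1 : ∀ m, g m < 1)
    (hsub : ∀ p q, g (p - q) = g p - g q ∨ g (p - q) = g p - g q + 1)
    (n a b x y : ℤ) (ha : 1 ≤ a ∧ a ≤ n) (hb : 1 ≤ b ∧ b ≤ n) (hx : 1 ≤ x ∧ x ≤ n)
    (hy : 1 ≤ y ∧ y ≤ n) (ha0 : 0 < g a)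
    (hmin : ∀ z, 1 ≤ z → z ≤ n → z = a ∨ g a < g z)
    (hmax : ∀ z, 1 ≤ z → z ≤ n → z = b ∨ g z < g b)
    (hxy : g x < g y)
    (hnext : ∀ z, 1 ≤ z → z ≤ n → g x < g z → z = y ∨ g y < g z) :
    y - x = a ∨ y - x = -b ∨ y - x = a - b := by
  have hadd : ∀ p q, g (p + q) = g p + g q ∨ g (p + q) = g p + g q - 1 := by
    intro p q
    have h := hsub (p + q) q
    rw [add_sub_cancel_right] at h
    rcases h with h | h
    · left; linarith
    · right; linarith
  have hmin' : ∀ z, 1 ≤ z → z ≤ n → g a ≤ g z := by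
    intro z hz hz'
    rcases hmin z hz hz' with rfl | h
    · exact le_rfl
    · exact h.le
  have hmax' : ∀ z, 1 ≤ z → z ≤ n → g z ≤ g b := by
    intro z hz hz'
    rcases hmax z hz hz' with rfl | h
    · exact le_rfl
    · exact h.le
  have hx1 := h1 x
  have hb1 := h1 b
  have hxb : g x < g b := hxy.trans_le (hmax' y hy.1 hy.2)
  have hne : x ≠ y := by rintro rfl; exact lt_irrefl _ hxy
  by_cases hc1 : x + a ≤ n
  · left
    have hm := hmin' (x + a) (by lia) hc1
    -- Wrapping around would put `x + a` below the minimiser `a`.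
    have hz : g (x + a) = g x + g a := by
      rcases hadd x a with h | h
      · exact h
      · linarith
    rcases hnext (x + a) (by lia) hc1 (by linarith) with h | h
    · lia
    exfalso
    rcases lt_or_gt_of_ne hne with hlt | hlt
    · have := hmin' (y - x) (by lia) (by lia)
      have := h1 (y - x)
      rcases hsub y x with h' | h' <;> linarith
    · have := hmin' (x + a - y) (by lia) (by lia)
      have := h1 (x + a - y)
      rcases hsub (x + a) y with h' | h' <;> linarith
  by_cases hc2 : b < x
  · right; left
    have hz : g (x - b) = g x - g b + 1 := by
      have := h0 (x - b)
      rcases hsub x b with h | h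
      · linarith
      · exact h
    rcases hnext (x - b) (by lia) (by lia) (by linarith) with h | h
    · lia
    exfalso
    rcases lt_or_gt_of_ne hne with hlt | hlt
    · have := hmax' (y - (x - b)) (by lia) (by lia)
      have := h0 (y - (x - b))
      rcases hsub y (x - b) with h' | h' <;> linarith
    · have := hmax' (x - y) (by lia) (by lia)
      have := h0 (x - y)
      rcases hsub x y with h' | h' <;> linarith
  · right; right
    have hm := hmin' (x + a - b) (by lia) (by lia)
    have hxa := hmin' x hx.1 hx.2
    -- Of the possible values of `g (x + a - b)`, those less than `g a` are excluded by minimality.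
    have hz : g (x + a - b) = g x + g a - g b + 1 := by
      have := h1 (x + a - b)
      rcases hadd x a with h | h <;> rcases hsub (x + a) b with h' | h' <;> linarith
    rcases hnext (x + a - b) (by lia) (by lia) (by linarith) with h | h
    · lia
    exfalso
    rcases lt_or_gt_of_ne hne with hlt | hlt
    -- With `d = y - x < a`, the integer `a - d` would exceed the maximum `g b`.
    · have hd : g (y - x) = g y - g x := by
        have := h1 (y - x)
        rcases hsub y x with h' | h' <;> linarith
      have hda : g a < g (y - x) := by
        rcases hmin (y - x) (by lia) (by lia) with h' | h'
        · lia
        · exact h'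
      have := hmax' (a - (y - x)) (by lia) (by lia)
      have := h0 (a - (y - x))
      rcases hsub a (y - x) with h' | h' <;> linarith
    -- With `e = x - y < b`, the integer `b - e` would fall below the minimum `g a`.
    · have he : g (x - y) = g x - g y + 1 := by
        have := h0 (x - y)
        rcases hsub x y with h' | h' <;> linarith
      have heb : g (x - y) < g b := by
        rcases hmax (x - y) (by lia) (by lia) with h' | h'
        · lia
        · exact h'
      have := hmin' (b - (x - y)) (by lia) (by lia)
      have := h1 (b - (x - y))
      rcases hsub b (x - y) with h' | h' <;> linarith

theorem fract_sub_eq_or (u v : ℝ) :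
    Int.fract (u - v) = Int.fract u - Int.fract v ∨
      Int.fract (u - v) = Int.fract u - Int.fract v + 1 := by
  have hu0 := Int.fract_nonneg u
  have hu1 := Int.fract_lt_one u
  have hv0 := Int.fract_nonneg v
  have hv1 := Int.fract_lt_one v
  rcases le_or_gt (Int.fract v) (Int.fract u) with h | h
  · left
    rw [Int.fract_eq_iff]
    refine ⟨by linarith, by linarith, ⌊u⌋ - ⌊v⌋, ?_⟩
    push_cast [Int.fract]
    ring
  · right
    rw [Int.fract_eq_iff]
    refine ⟨by linarith, by linarith, ⌊u⌋ - ⌊v⌋ - 1, ?_⟩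
    push_cast [Int.fract]
    ring

/-- Three-distance theorem, permutation form (Sós): if `α` is irrational, `n ≥ 1`, and
`σ` is the (unique) permutation of `{1,…,n}` sorting the fractional parts
`Int.fract (i * α)` increasingly, then every consecutive difference `σ(i+1) - σ(i)` (in ℤ)
lies in the three-element set `{σ(1), -σ(n), σ(1) - σ(n)}`. -/
theorem threeDistance_perm_form (α : ℝ) (hα : Irrational α) (n : ℕ) (hn : 1 ≤ n)
    (σ : ℕ → ℕ) (hbij : Set.BijOn σ (Set.Icc 1 n) (Set.Icc 1 n))
    (hsorted : ∀ k ∈ Set.Icc 1 n, ∀ l ∈ Set.Icc 1 n, k < l →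
      Int.fract ((σ k : ℝ) * α) < Int.fract ((σ l : ℝ) * α)) :
    ∀ i ∈ Set.Icc 1 (n - 1),
      (σ (i + 1) : ℤ) - (σ i : ℤ) ∈
        ({(σ 1 : ℤ), -(σ n : ℤ), (σ 1 : ℤ) - (σ n : ℤ)} : Set ℤ) := by
  rintro i ⟨hi1, hin⟩
  have hin' : i + 1 ≤ n := by lia
  have hmem : ∀ k, 1 ≤ k → k ≤ n → (1 : ℤ) ≤ σ k ∧ (σ k : ℤ) ≤ n := by
    intro k hk hk'
    have h := hbij.mapsTo (show k ∈ Set.Icc 1 n from ⟨hk, hk'⟩)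
    exact ⟨by exact_mod_cast h.1, by exact_mod_cast h.2⟩
  have hsurj : ∀ z : ℤ, 1 ≤ z → z ≤ n → ∃ k, 1 ≤ k ∧ k ≤ n ∧ z = σ k := by
    intro z hz hz'
    obtain ⟨k, hk, hkz⟩ := hbij.surjOn (show z.toNat ∈ Set.Icc 1 n from ⟨by lia, by lia⟩)
    exact ⟨k, hk.1, hk.2, by lia⟩
  have hlt : ∀ k l, 1 ≤ k → k < l → l ≤ n →
      Int.fract (((σ k : ℤ) : ℝ) * α) < Int.fract (((σ l : ℤ) : ℝ) * α) := by
    intro k l hk hkl hl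
    exact_mod_cast hsorted k ⟨hk, by lia⟩ l ⟨by lia, hl⟩ hkl
  simp only [Set.mem_insert_iff, Set.mem_singleton_iff]
  refine sub_mem_of_succ (fun m : ℤ => Int.fract ((m : ℝ) * α)) (fun _ => Int.fract_nonneg _)
    (fun _ => Int.fract_lt_one _) ?_ n (σ 1) (σ n) (σ i) (σ (i + 1)) (hmem 1 le_rfl hn)
    (hmem n hn le_rfl) (hmem i hi1 (by lia)) (hmem (i + 1) (by lia) hin') ?_ ?_ ?_
    (hlt i (i + 1) hi1 (by lia) hin') ?_
  · intro p q
    simp only [Int.cast_sub, sub_mul]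
    exact fract_sub_eq_or _ _
  · have hpos := (hmem 1 le_rfl hn).1
    have hirr : Irrational (((σ 1 : ℤ) : ℝ) * α) := hα.intCast_mul (by lia)
    refine lt_of_le_of_ne (Int.fract_nonneg _) fun h => ?_
    obtain ⟨m, hm⟩ := Int.fract_eq_zero_iff.mp h.symm
    exact hirr.ne_int m hm.symm
  · intro z hz hz'
    obtain ⟨k, hk, hk', rfl⟩ := hsurj z hz hz'
    rcases hk.eq_or_lt with rfl | h
    · exact Or.inl rfl
    · exact Or.inr (hlt 1 k le_rfl h hk')
  · intro z hz hz'
    obtain ⟨k, hk, hk', rfl⟩ := hsurj z hz hz'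
    rcases hk'.eq_or_lt with rfl | h
    · exact Or.inl rfl
    · exact Or.inr (hlt k n hk h le_rfl)
  · intro z hz hz' hxz
    obtain ⟨k, hk, hk', rfl⟩ := hsurj z hz hz'
    rcases lt_trichotomy k (i + 1) with h | rfl | h
    · exfalso
      rcases (Nat.lt_succ_iff.mp h).eq_or_lt with rfl | h'
      · exact lt_irrefl _ hxz
      · exact lt_asymm hxz (hlt k i hk h' (by lia))
    · exact Or.inl rfl
    · exact Or.inr (hlt (i + 1) k (by lia) h hk')
end

section
/- Let α be an irrational real number, n ≥ 2 an integer, and let σ be the unique permutation of {1,…,n} with frac(σ(1)·α) < frac(σ(2)·α) < … < frac(σ(n)·α). Then the set of integer differences { σ(i+1) − σ(i) : i ∈ {1,…,n−1} } contains at most three distinct values. -/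
/-!
Let `p` and `q` in `{1,…,n-1}` minimise `u = fract (p α)` and `v = fract (-q α)`: adding `p` to an
index is the smallest possible move to the right, subtracting `q` is the other smallest one.
Let `a`, `b` be the indices of neighbouring points, with gap `g = fract ((b - a) α)`.

Suppose `a < b`. Then `u ≤ g`, with equality only for `b - a = p`. If `u < g`, the indices `a + p`
and `b - p` would give points strictly inside the gap, so they leave `{1,…,n}`: `n < a + p` and
`b ≤ p`. Hence `p - (b - a)` lies in `{1,…,n-1}` and moves left by `g - u`, so that `v ≤ g - u`.
Now `a - q` would lie strictly inside the gap, so `a ≤ q`, and `a + p - q` is an index in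
`{1,…,n}` whose point is at distance `0 < u + v ≤ g` to the right of `a`; it must be `b`, and
`b - a = p - q`. This is `diff_of_lt`.

Replacing `α` by `-α` reverses the order of the points and exchanges `p` with `q`, so `b < a` gives
`a - b = q` or `a - b = q - p`. Altogether `b - a` is one of `p`, `-q`, `p - q`.
-/

theorem fract_add_of_lt {x y : ℝ} (h : Int.fract x + Int.fract y < 1) :
    Int.fract (x + y) = Int.fract x + Int.fract y := by
  rw [Int.fract_eq_iff]
  refine ⟨add_nonneg (Int.fract_nonneg _) (Int.fract_nonneg _), h, ⌊x⌋ + ⌊y⌋, ?_⟩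
  push_cast
  linarith [Int.floor_add_fract x, Int.floor_add_fract y]

theorem fract_sub_of_le {x y : ℝ} (h : Int.fract y ≤ Int.fract x) :
    Int.fract (x - y) = Int.fract x - Int.fract y := by
  rw [Int.fract_eq_iff]
  refine ⟨by linarith, by linarith [Int.fract_lt_one x, Int.fract_nonneg y], ⌊x⌋ - ⌊y⌋, ?_⟩
  push_cast
  linarith [Int.floor_add_fract x, Int.floor_add_fract y]

theorem fract_mul_injective {α : ℝ} (hα : Irrational α) {k m : ℤ}
    (h : Int.fract (k * α) = Int.fract (m * α)) : k = m := by
  by_contra hne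
  obtain ⟨z, hz⟩ := Int.fract_eq_fract.1 h
  refine (hα.intCast_mul (sub_ne_zero.2 hne)).ne_int z ?_
  push_cast
  linarith

theorem fract_mul_pos {α : ℝ} (hα : Irrational α) {k : ℤ} (hk : k ≠ 0) :
    0 < Int.fract (k * α) := by
  refine (Int.fract_nonneg _).lt_of_ne fun h => hk ?_
  exact fract_mul_injective hα (m := 0) (by simp [← h])

theorem fract_mul_neg {α : ℝ} (hα : Irrational α) {k : ℤ} (hk : k ≠ 0) :
    Int.fract (k * -α) = 1 - Int.fract (k * α) := by
  rw [mul_neg, Int.fract_neg (fract_mul_pos hα hk).ne']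

/-- The possible index differences between neighbours `a`, `b` when the right-hand neighbour `b` has
the larger index. -/
theorem diff_of_lt {α : ℝ} (hα : Irrational α) {n p q a b : ℤ}
    (hp : 1 ≤ p ∧ p ≤ n - 1) (hq : 1 ≤ q ∧ q ≤ n - 1)
    (hpmin : ∀ m : ℤ, 1 ≤ m → m ≤ n - 1 → Int.fract (p * α) ≤ Int.fract (m * α))
    (hqmin : ∀ m : ℤ, 1 ≤ m → m ≤ n - 1 → Int.fract (q * -α) ≤ Int.fract (m * -α))
    (ha : 1 ≤ a) (hb : b ≤ n) (hab : a < b)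
    (hlt : Int.fract (a * α) < Int.fract (b * α))
    (hcons : ∀ k : ℤ, 1 ≤ k → k ≤ n → Int.fract (a * α) < Int.fract (k * α) →
      Int.fract (b * α) ≤ Int.fract (k * α)) :
    b - a = p ∨ b - a = p - q := by
  have hgap : Int.fract (((b - a : ℤ) : ℝ) * α) = Int.fract (b * α) - Int.fract (a * α) := by
    rw [← fract_sub_of_le hlt.le]; push_cast; ring_nf
  have hb1 := Int.fract_lt_one ((b : ℝ) * α)
  have hu0 : 0 < Int.fract (p * α) := fract_mul_pos hα (by omega)
  have hv0 : 0 < Int.fract (q * -α) := fract_mul_pos hα.neg (by omega)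
  have ha0 := Int.fract_nonneg ((a : ℝ) * α)
  rcases (hpmin (b - a) (by omega) (by omega)).eq_or_lt with h | hu
  · exact .inl (fract_mul_injective hα h).symm
  right
  have hfap : Int.fract (((a + p : ℤ) : ℝ) * α) = Int.fract (a * α) + Int.fract (p * α) := by
    rw [← fract_add_of_lt (by linarith)]; push_cast; ring_nf
  have hap : n < a + p := by
    by_contra! h
    have := hcons (a + p) (by omega) h (by linarith)
    linarith
  have hbp : b ≤ p := by
    by_contra! h
    have e : Int.fract (((b - p : ℤ) : ℝ) * α) = Int.fract (b * α) - Int.fract (p * α) := by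
      rw [← fract_sub_of_le (by linarith)]; push_cast; ring_nf
    have := hcons (b - p) (by omega) (by omega) (by linarith)
    linarith
  have hv : Int.fract (q * -α) ≤ Int.fract (((b - a : ℤ) : ℝ) * α) - Int.fract (p * α) := by
    refine (hqmin (p - (b - a)) (by omega) (by omega)).trans_eq ?_
    rw [← fract_sub_of_le hu.le]; push_cast; ring_nf
  have haq : a ≤ q := by
    by_contra! h
    have e : Int.fract (((a - q : ℤ) : ℝ) * α) = Int.fract (a * α) + Int.fract (q * -α) := by
      rw [← fract_add_of_lt (by linarith)]; push_cast; ring_nf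
    have := hcons (a - q) (by omega) (by omega) (by linarith)
    linarith
  have e : Int.fract (((a + p - q : ℤ) : ℝ) * α) =
      Int.fract (a * α) + Int.fract (p * α) + Int.fract (q * -α) := by
    rw [← hfap, ← fract_add_of_lt (by linarith)]; push_cast; ring_nf
  have h := hcons (a + p - q) (by omega) (by omega) (by linarith)
  have := fract_mul_injective hα (k := b) (m := a + p - q) (by linarith)
  omega

theorem exists_min_fract (α : ℝ) {n : ℤ} (hn : 2 ≤ n) : ∃ p : ℤ, (1 ≤ p ∧ p ≤ n - 1) ∧
    ∀ m : ℤ, 1 ≤ m → m ≤ n - 1 → Int.fract (p * α) ≤ Int.fract (m * α) := by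
  obtain ⟨p, hp, h⟩ := (Finset.Icc 1 (n - 1)).exists_min_image
    (fun m : ℤ => Int.fract (m * α)) ⟨1, by simp; omega⟩
  exact ⟨p, Finset.mem_Icc.1 hp, fun m h1 h2 => h m (Finset.mem_Icc.2 ⟨h1, h2⟩)⟩

/-- If `α` is irrational, `n ≥ 2`, and `σ` is the (unique) permutation of `{1,…,n}`
sorting the fractional parts `Int.fract (i * α)` increasingly, then the set of
consecutive integer differences `{σ(i+1) - σ(i) : 1 ≤ i ≤ n-1}` has at most three
distinct values. -/
theorem threeDistance_diffs_card_le_three (α : ℝ) (hα : Irrational α) (n : ℕ) (hn : 2 ≤ n)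
    (σ : ℕ → ℕ) (hbij : Set.BijOn σ (Set.Icc 1 n) (Set.Icc 1 n))
    (hsorted : ∀ k ∈ Set.Icc 1 n, ∀ l ∈ Set.Icc 1 n, k < l →
      Int.fract ((σ k : ℝ) * α) < Int.fract ((σ l : ℝ) * α)) :
    ((Finset.Icc 1 (n - 1)).image fun i => (σ (i + 1) : ℤ) - (σ i : ℤ)).card ≤ 3 := by

  obtain ⟨p, hp, hpmin⟩ := exists_min_fract α (n := n) (by omega)
  obtain ⟨q, hq, hqmin⟩ := exists_min_fract (-α) (n := n) (by omega)
  suffices hsub : ((Finset.Icc 1 (n - 1)).image fun i => (σ (i + 1) : ℤ) - (σ i : ℤ)) ⊆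
      {p, -q, p - q} from (Finset.card_le_card hsub).trans Finset.card_le_three
  intro d hd
  obtain ⟨i, hi, rfl⟩ := Finset.mem_image.1 hd
  rw [Finset.mem_Icc] at hi
  have hi1 : i ∈ Set.Icc 1 n := ⟨hi.1, by omega⟩
  have hi2 : i + 1 ∈ Set.Icc 1 n := ⟨by omega, by omega⟩
  have hlt := hsorted i hi1 (i + 1) hi2 (by omega)
  obtain ⟨ha1, han⟩ := hbij.mapsTo hi1
  obtain ⟨hb1, hbn⟩ := hbij.mapsTo hi2
  have hcons : ∀ k : ℤ, 1 ≤ k → k ≤ n → Int.fract (k * α) ≤ Int.fract ((σ i : ℝ) * α) ∨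
      Int.fract ((σ (i + 1) : ℝ) * α) ≤ Int.fract (k * α) := by
    intro k hk1 hkn
    lift k to ℕ using by omega
    obtain ⟨j, hj, rfl⟩ := hbij.surjOn (show k ∈ Set.Icc 1 n from ⟨by omega, by omega⟩)
    rw [Int.cast_natCast]
    rcases lt_trichotomy j i with h | rfl | h
    · exact .inl (hsorted j hj i hi1 h).le
    · exact .inl le_rfl
    · rcases (Nat.succ_le_of_lt h).eq_or_lt with rfl | h
      · exact .inr le_rfl
      · exact .inr (hsorted (i + 1) hi2 j hj h).le
  generalize σ i = a at *
  generalize σ (i + 1) = b at *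
  simp only [Finset.mem_insert, Finset.mem_singleton]
  have hne : a ≠ b := by rintro rfl; exact hlt.false
  rcases hne.lt_or_gt with hab | hab
  · have := diff_of_lt hα (a := a) (b := b) hp hq hpmin hqmin (by omega) (by omega) (by omega)
      (by simpa using hlt) fun k h1 h2 h => by
        have := hcons k h1 h2
        simp only [Int.cast_natCast] at h ⊢
        exact this.resolve_left h.not_ge
    omega
  · have ea := fract_mul_neg hα (k := a) (by omega)
    have eb := fract_mul_neg hα (k := b) (by omega)
    simp only [Int.cast_natCast] at ea eb
    have := diff_of_lt hα.neg (a := b) (b := a) hq hp hqmin (by simpa using hpmin)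
      (by omega) (by omega) (by omega)
      (by simp only [Int.cast_natCast]; linarith) fun k h1 h2 h => by
        have ek := fract_mul_neg hα (k := k) (by omega)
        simp only [Int.cast_natCast] at h ⊢
        rcases hcons k h1 h2 with h' | h' <;> linarith
    omega
end

section
/- Three-gap theorem (Sós): Let α be an irrational real number and n ≥ 1 an integer, and let σ be the unique permutation of {1,…,n} with frac(σ(1)·α) < frac(σ(2)·α) < … < frac(σ(n)·α). Consider the n circular gaps between consecutive points of { frac(i·α) : i ∈ {1,…,n} } on the torus ℝ/ℤ, namely the values frac(σ(i+1)·α) − frac(σ(i)·α) for i ∈ {1,…,n−1} together with the wrap-around gap 1 − frac(σ(n)·α) + frac(σ(1)·α). Then the set of these n gap lengths contains at most three distinct values. -/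
/-!
The proof shifts gaps along the rotation by `α` (an argument going back to Liang). A gap with
endpoint indices `(i, j)` has the same length as the translated arc `(i + 1, j + 1)`. That arc is
again a gap unless an endpoint leaves `{1, …, n}`, i.e. `i = n` or `j = n`, or a point of the set
falls strictly inside it. In the last case that point must have index `1`, since any other one could
be shifted back into the original gap; equivalently, the point of index `0` lies strictly inside the
gap `(i, j)`. As indices are bounded, shifting stops, so every gap has the length of
a gap of one of these three kinds (`ThreeGap.exists_rigid`).

There is only one gap starting at the point of index `n`, and only one half-open gap
containing a prescribed point (`ThreeGap.arc_eq_of_mem`), which is applied to the points of index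
`n` and `0`. Hence there are at most three lengths.
-/

namespace ThreeGap

/-- Length of the positively oriented arc of `ℝ/ℤ` from the point of index `i` to that of index
`j`. Indices are integers so that the arc depends visibly on `j - i` only. -/
noncomputable def arc (α : ℝ) (i j : ℤ) : ℝ := Int.fract (((j - i : ℤ) : ℝ) * α)

/-- `j` is a successor of `i` on the circle among the points of index `1, …, n`: no point other
than `i` itself is met strictly before `j` when moving from `i` in the positive direction. -/
def Adj (α : ℝ) (n i j : ℤ) : Prop :=
  (1 ≤ i ∧ i ≤ n) ∧ (1 ≤ j ∧ j ≤ n) ∧ j ≠ i ∧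
    ∀ k, 1 ≤ k → k ≤ n → k ≠ i → arc α i j ≤ arc α i k

lemma arc_shift (α : ℝ) (i j : ℤ) : arc α (i + 1) (j + 1) = arc α i j := by
  unfold arc
  congr 3
  ring

lemma arc_pos {α : ℝ} (hα : Irrational α) {i j : ℤ} (h : j ≠ i) : 0 < arc α i j := by
  refine Int.fract_pos.2 fun h0 => ?_
  exact (hα.intCast_mul (sub_ne_zero.2 h)).ne_int _ h0

lemma arc_eq_sub {α : ℝ} {a b : ℕ} (h : Int.fract ((a : ℝ) * α) ≤ Int.fract ((b : ℝ) * α)) :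
    arc α a b = Int.fract ((b : ℝ) * α) - Int.fract ((a : ℝ) * α) := by
  unfold arc
  have ha := Int.fract_nonneg ((a : ℝ) * α)
  have hb := Int.fract_lt_one ((b : ℝ) * α)
  refine Int.fract_eq_iff.2 ⟨by linarith, by linarith, ⌊(b : ℝ) * α⌋ - ⌊(a : ℝ) * α⌋, ?_⟩
  simp only [Int.fract]
  push_cast
  ring

lemma arc_eq_one_add_sub {α : ℝ} {a b : ℕ}
    (h : Int.fract ((b : ℝ) * α) < Int.fract ((a : ℝ) * α)) :
    arc α a b = 1 - Int.fract ((a : ℝ) * α) + Int.fract ((b : ℝ) * α) := by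
  unfold arc
  have ha := Int.fract_lt_one ((a : ℝ) * α)
  have hb := Int.fract_nonneg ((b : ℝ) * α)
  refine Int.fract_eq_iff.2 ⟨by linarith, by linarith, ⌊(b : ℝ) * α⌋ - ⌊(a : ℝ) * α⌋ - 1, ?_⟩
  simp only [Int.fract]
  push_cast
  ring

/-- Two gaps whose half-open arcs `(i, j]` and `(i', j']` contain the same point `p` have the same
length. -/
lemma arc_eq_of_mem {α : ℝ} {n i j i' j' p : ℤ}
    (h : Adj α n i j) (h' : Adj α n i' j')
    (hp : 0 < arc α i p) (hpj : arc α i p ≤ arc α i j)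
    (hp' : 0 < arc α i' p) (hpj' : arc α i' p ≤ arc α i' j') :
    arc α i j = arc α i' j' := by
  obtain ⟨⟨hi1, hin⟩, ⟨hj1, hjn⟩, hji, hmin⟩ := h
  obtain ⟨⟨hi1', hin'⟩, ⟨hj1', hjn'⟩, hji', hmin'⟩ := h'
  by_cases hii : i' = i
  · subst hii
    exact le_antisymm (hmin _ hj1' hjn' hji') (hmin' _ hj1 hjn hji)
  exfalso
  -- Distinct starting points would make the arcs from `i` to `p` and from `i'` to `p` fit into the
  -- complementary arcs from `i` to `i'` and from `i'` to `i`.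
  have h1 := hmin _ hi1' hin' hii
  have h2 := hmin' _ hi1 hin (Ne.symm hii)
  obtain ⟨u, hu⟩ : ∃ u : ℤ, arc α i i' + arc α i' i = u := by
    refine ⟨-⌊((i' - i : ℤ) : ℝ) * α⌋ - ⌊((i - i' : ℤ) : ℝ) * α⌋, ?_⟩
    simp only [arc, Int.fract]
    push_cast
    ring
  obtain ⟨v, hv⟩ : ∃ v : ℤ, arc α i i' + arc α i' p - arc α i p = v := by
    refine ⟨⌊((p - i : ℤ) : ℝ) * α⌋ - ⌊((i' - i : ℤ) : ℝ) * α⌋ - ⌊((p - i' : ℤ) : ℝ) * α⌋, ?_⟩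
    simp only [arc, Int.fract]
    push_cast
    ring
  have b1 : arc α i i' < 1 := Int.fract_lt_one _
  have b2 : arc α i' i < 1 := Int.fract_lt_one _
  have hu2 : u < 2 := by
    have : (u : ℝ) < 2 := by linarith
    exact_mod_cast this
  have hv0 : 0 < v := by
    have : (0 : ℝ) < v := by linarith
    exact_mod_cast this
  have hvu : v < u := by
    have : (v : ℝ) < u := by linarith
    exact_mod_cast this
  omega

/-- Shifting a gap until it can be shifted no further: every gap has the length of one that starts
at `n`, ends at `n`, or contains the point of index `0` in its half-open arc `(i', j']`. -/
lemma exists_rigid {α : ℝ} (hα : Irrational α) {n : ℤ} (m : ℕ) :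
    ∀ i j : ℤ, n - i = m → Adj α n i j → ∃ i' j', Adj α n i' j' ∧ arc α i j = arc α i' j' ∧
      (i' = n ∨ j' = n ∨ (0 < arc α i' 0 ∧ arc α i' 0 ≤ arc α i' j')) := by
  induction m with
  | zero => exact fun i j hm h => ⟨i, j, h, rfl, Or.inl (by push_cast at hm; omega)⟩
  | succ m ih =>
    intro i j hm h
    by_cases hj : j = n
    · exact ⟨i, j, h, rfl, Or.inr (Or.inl hj)⟩
    by_cases hs : Adj α n (i + 1) (j + 1)
    · obtain ⟨i', j', h', he, hr⟩ := ih (i + 1) (j + 1) (by push_cast at hm; omega) hs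
      exact ⟨i', j', h', by rw [← he, arc_shift], hr⟩
    · refine ⟨i, j, h, rfl, Or.inr (Or.inr ?_)⟩
      obtain ⟨⟨hi1, hin⟩, ⟨hj1, hjn⟩, hji, hmin⟩ := h
      refine ⟨arc_pos hα (by omega), ?_⟩
      by_contra! hlt
      refine hs ⟨⟨by omega, by push_cast at hm; omega⟩, ⟨by omega, by omega⟩, by omega, ?_⟩
      intro k hk1 hkn hki
      have hk : arc α (i + 1) k = arc α i (k - 1) := by
        rw [← arc_shift α i (k - 1), sub_add_cancel]
      rw [arc_shift, hk]
      by_cases hk2 : k = 1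
      · subst hk2
        simpa using hlt.le
      · exact hmin _ (by omega) (by omega) (by omega)

lemma exists_const {P : ℤ → ℤ → Prop} {f : ℤ → ℤ → ℝ}
    (h : ∀ i j i' j', P i j → P i' j' → f i j = f i' j') : ∃ c, ∀ i j, P i j → f i j = c := by
  by_cases hP : ∃ i j, P i j
  · obtain ⟨i, j, hij⟩ := hP
    exact ⟨f i j, fun i' j' h' => h _ _ _ _ h' hij⟩
  · exact ⟨0, fun i j hij => (hP ⟨i, j, hij⟩).elim⟩

lemma exists_three {α : ℝ} (hα : Irrational α) (n : ℤ) :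
    ∃ a b c : ℝ, ∀ i j, Adj α n i j → arc α i j = a ∨ arc α i j = b ∨ arc α i j = c := by
  obtain ⟨a, ha⟩ := exists_const (P := fun i j => Adj α n i j ∧ i = n) (f := arc α) (by
    rintro i j i' j' ⟨h, rfl⟩ ⟨h', rfl⟩
    exact le_antisymm (h.2.2.2 _ h'.2.1.1 h'.2.1.2 h'.2.2.1) (h'.2.2.2 _ h.2.1.1 h.2.1.2 h.2.2.1))
  obtain ⟨b, hb⟩ := exists_const (P := fun i j => Adj α n i j ∧ j = n) (f := arc α) (by
    rintro i j i' j' ⟨h, rfl⟩ ⟨h', rfl⟩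
    exact arc_eq_of_mem h h' (arc_pos hα h.2.2.1) le_rfl (arc_pos hα h'.2.2.1) le_rfl)
  obtain ⟨c, hc⟩ := exists_const
    (P := fun i j => Adj α n i j ∧ 0 < arc α i 0 ∧ arc α i 0 ≤ arc α i j) (f := arc α) (by
    rintro i j i' j' ⟨h, h1, h2⟩ ⟨h', h1', h2'⟩
    exact arc_eq_of_mem h h' h1 h2 h1' h2')
  refine ⟨a, b, c, fun i j h => ?_⟩
  obtain ⟨i', j', h', he, hr⟩ := exists_rigid hα (n - i).toNat i j (by have := h.1.2; omega) h
  rw [he]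
  rcases hr with hr | hr | hr
  · exact Or.inl (ha _ _ ⟨h', hr⟩)
  · exact Or.inr (Or.inl (hb _ _ ⟨h', hr⟩))
  · exact Or.inr (Or.inr (hc _ _ ⟨h', hr⟩))

end ThreeGap


/-- Three-gap theorem (Sós): if `α` is irrational, `n ≥ 1`, and `σ` is the (unique)
permutation of `{1,…,n}` sorting the fractional parts `Int.fract (i * α)` increasingly,
then the `n` circular gaps between consecutive points of `{Int.fract (i * α) : 1 ≤ i ≤ n}`
on the torus `ℝ/ℤ` — namely `Int.fract (σ(i+1) * α) - Int.fract (σ(i) * α)` for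
`1 ≤ i ≤ n-1` together with the wrap-around gap
`1 - Int.fract (σ(n) * α) + Int.fract (σ(1) * α)` — take at most three distinct values. -/
theorem threeGap_card_le_three (α : ℝ) (hα : Irrational α) (n : ℕ) (hn : 1 ≤ n)
    (σ : ℕ → ℕ) (hbij : Set.BijOn σ (Set.Icc 1 n) (Set.Icc 1 n))
    (hsorted : ∀ k ∈ Set.Icc 1 n, ∀ l ∈ Set.Icc 1 n, k < l →
      Int.fract ((σ k : ℝ) * α) < Int.fract ((σ l : ℝ) * α)) :
    ((Finset.Icc 1 n).image fun i =>
        if i < n then Int.fract ((σ (i + 1) : ℝ) * α) - Int.fract ((σ i : ℝ) * α)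
        else 1 - Int.fract ((σ n : ℝ) * α) + Int.fract ((σ 1 : ℝ) * α)).card ≤ 3 := by
  -- For `n = 1` the only gap is the full circle, which is not of the form `arc α i j`.
  rcases hn.eq_or_lt with rfl | hn2
  · exact Finset.card_image_le.trans (by simp)
  obtain ⟨a, b, c, habc⟩ := ThreeGap.exists_three hα n
  refine (Finset.card_le_card (t := {a, b, c}) ?_).trans Finset.card_le_three
  intro x hx
  obtain ⟨i, hi, rfl⟩ := Finset.mem_image.1 hx
  rw [Finset.mem_Icc] at hi
  obtain ⟨hi1, hin⟩ := hi
  suffices H : ∃ p q : ℤ, ThreeGap.Adj α n p q ∧ ThreeGap.arc α p q =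
      if i < n then Int.fract ((σ (i + 1) : ℝ) * α) - Int.fract ((σ i : ℝ) * α)
        else 1 - Int.fract ((σ n : ℝ) * α) + Int.fract ((σ 1 : ℝ) * α) by
    obtain ⟨p, q, hpq, he⟩ := H
    simpa [he] using habc p q hpq
  have hmem : ∀ k, 1 ≤ k → k ≤ n → (1 : ℤ) ≤ σ k ∧ (σ k : ℤ) ≤ n := fun k h1 h2 => by
    have := hbij.mapsTo (Set.mem_Icc.2 ⟨h1, h2⟩)
    rw [Set.mem_Icc] at this
    omega
  have hsurj : ∀ k : ℤ, 1 ≤ k → k ≤ n → ∃ l, (1 ≤ l ∧ l ≤ n) ∧ k = σ l := fun k h1 h2 => by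
    obtain ⟨l, hl, he⟩ := hbij.surjOn
      (Set.mem_Icc.2 (⟨by omega, by omega⟩ : 1 ≤ k.toNat ∧ k.toNat ≤ n))
    exact ⟨l, hl, by omega⟩
  have hlt : ∀ k l, 1 ≤ k → k < l → l ≤ n →
      Int.fract ((σ k : ℝ) * α) < Int.fract ((σ l : ℝ) * α) := fun k l h1 h2 h3 =>
    hsorted k ⟨h1, by omega⟩ l ⟨by omega, h3⟩ h2
  have hle : ∀ k l, 1 ≤ k → k ≤ l → l ≤ n →
      Int.fract ((σ k : ℝ) * α) ≤ Int.fract ((σ l : ℝ) * α) := fun k l h1 h2 h3 => by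
    rcases h2.eq_or_lt with rfl | h2
    · exact le_rfl
    · exact (hlt k l h1 h2 h3).le
  have hne : ∀ k l, 1 ≤ k → k < l → l ≤ n → (σ k : ℤ) ≠ σ l := fun k l h1 h2 h3 he => by
    have := hlt k l h1 h2 h3
    rw [Int.natCast_inj.1 he] at this
    exact this.false
  by_cases hi : i < n
  · rw [if_pos hi]
    have he := ThreeGap.arc_eq_sub (hle i (i + 1) hi1 (by omega) hi)
    refine ⟨σ i, σ (i + 1), ⟨hmem _ hi1 hin, hmem _ (by omega) hi,
      (hne i (i + 1) hi1 (by omega) hi).symm, fun k hk1 hkn hki => ?_⟩, he⟩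
    obtain ⟨l, ⟨hl1, hln⟩, rfl⟩ := hsurj k hk1 hkn
    rw [he]
    rcases lt_trichotomy l i with h | rfl | h
    · rw [ThreeGap.arc_eq_one_add_sub (hlt l i hl1 h hin)]
      have := Int.fract_nonneg ((σ l : ℝ) * α)
      have := Int.fract_lt_one ((σ (i + 1) : ℝ) * α)
      linarith
    · exact absurd rfl hki
    · rw [ThreeGap.arc_eq_sub (hle i l hi1 h.le hln)]
      have := hle (i + 1) l (by omega) h hln
      linarith
  · rw [if_neg hi]
    have he := ThreeGap.arc_eq_one_add_sub (hlt 1 n le_rfl hn2 le_rfl)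
    refine ⟨σ n, σ 1, ⟨hmem _ hn le_rfl, hmem _ le_rfl hn, hne 1 n le_rfl hn2 le_rfl,
      fun k hk1 hkn hki => ?_⟩, he⟩
    obtain ⟨l, ⟨hl1, hln⟩, rfl⟩ := hsurj k hk1 hkn
    have hl : l < n := lt_of_le_of_ne hln fun h => hki (by rw [h])
    rw [he, ThreeGap.arc_eq_one_add_sub (hlt l n hl1 hl le_rfl)]
    have := hle 1 l le_rfl hl1 hln
    linarith
end
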